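/- Every CPA-structure on the free-nilpotent Lie algebra F_{3,3} on 3 generators of nilpotency class 3, over a field K of characteristic zero, is central, i.e., satisfies x·y ∈ Z(F_{3,3}) for all x,y. -/

import Mathlib

structure IsCPAStructure (K : Type*) {L : Type*} [CommRing K] [LieRing L] [LieAlgebra K L]
    (mul : L →ₗ[K] L →ₗ[K] L) : Prop where
  comm : ∀ x y : L, mul x y = mul y x
  bracket_mul : ∀ x y z : L, mul ⁅x, y⁆ z = mul x (mul y z) - mul y (mul x z)
  mul_bracket : ∀ x y z : L, mul x ⁅y, z⁆ = ⁅mul x y, z⁆ + ⁅y, mul x z⁆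

/-- The free-nilpotent Lie algebra \`F_{g,c}\` on \`g\` generators of nilpotency class \`c\`:
the quotient of the free Lie algebra on \`g\` generators by the \`(c+1)\`-st term \`𝔤^{c+1}\` of
its lower central series (which is \`lowerCentralSeries c\` in Mathlib's indexing). -/
abbrev FreeNilpotentLieAlgebra (K : Type*) [Field K] (g c : ℕ) :=
  FreeLieAlgebra K (Fin g) ⧸
    LieModule.lowerCentralSeries K (FreeLieAlgebra K (Fin g)) (FreeLieAlgebra K (Fin g)) c

/-!
Products of generators first land in the derived algebra: expanding the symmetric expression
`⁅x, y⁆ · ⁅x, z⁆` gives a cyclic identity which, for generators, says that a matrix of structure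
constants is a Jacobi relation, hence scalar, and commutativity kills it.

Write `c` for the structure constants of the products of generators in degree two. Computing
`⁅e y, e z⁆ · e x` in two ways yields relations between triple brackets, so again matrices that must
be scalar. Contracting these relations in three ways shows that the traceless `3 × 3` matrix `t`
formed from the alternating part of `c` satisfies `3 t = 2 t ^ 2 - 2 adj t`, and Cayley–Hamilton
turns this into `3 t = -2 tr (adj t) • 1`. Taking traces gives `tr (adj t) = 0`, so `t = 0`, and
then `c = 0`, as soon as `6` is regular. So all products lie in the last nonzero term of the lower
central series, which is central.

That triple brackets in the free Lie algebra satisfy no relation besides Jacobi is detected by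
representing the generators by superdiagonal `4 × 4` matrices.
-/

open LieModule Matrix

section LowerCentralSeries

variable {R L ι : Type*} [CommRing R] [LieRing L] [LieAlgebra R L]

lemma lowerCentralSeries_succ_le_iff {k : ℕ} {N : Submodule R L} :
    (lowerCentralSeries R L L (k + 1)).toSubmodule ≤ N ↔
      ∀ x : L, ∀ y ∈ lowerCentralSeries R L L k, ⁅x, y⁆ ∈ N := by
  rw [lowerCentralSeries_succ, LieSubmodule.lieIdeal_oper_eq_linear_span', Submodule.span_le]
  exact ⟨fun h x y hy ↦ h ⟨x, LieSubmodule.mem_top x, y, hy, rfl⟩,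
    fun h _ ⟨x, _, y, hy, hxy⟩ ↦ hxy ▸ h x y hy⟩

lemma lie_mem_lowerCentralSeries_succ (x : L) {y : L} {k : ℕ}
    (hy : y ∈ lowerCentralSeries R L L k) : ⁅x, y⁆ ∈ lowerCentralSeries R L L (k + 1) :=
  lowerCentralSeries_succ_le_iff.1 le_rfl x y hy

lemma lie_mem_lowerCentralSeries {x y : L} {j k : ℕ} (hx : x ∈ lowerCentralSeries R L L j)
    (hy : y ∈ lowerCentralSeries R L L k) : ⁅x, y⁆ ∈ lowerCentralSeries R L L (j + k + 1) := by
  induction k generalizing j x y with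
  | zero =>
    rw [← lie_skew]
    exact neg_mem (lie_mem_lowerCentralSeries_succ y hx)
  | succ k ih =>
    suffices (lowerCentralSeries R L L (k + 1)).toSubmodule ≤
        (lowerCentralSeries R L L (j + (k + 1) + 1)).toSubmodule.comap (LieAlgebra.ad R L x) from
      this hy
    refine lowerCentralSeries_succ_le_iff.2 fun a b hb ↦ ?_
    have hxa : ⁅x, a⁆ ∈ lowerCentralSeries R L L (j + 1) := by
      rw [← lie_skew]
      exact neg_mem (lie_mem_lowerCentralSeries_succ a hx)
    rw [Submodule.mem_comap, LieAlgebra.ad_apply, leibniz_lie]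
    exact add_mem (by simpa only [add_right_comm j 1 k] using! ih hxa hb)
      (lie_mem_lowerCentralSeries_succ a (ih hx hb))

lemma span_range_sup_lowerCentralSeries_one {e : ι → L}
    (he : LieSubalgebra.lieSpan R L (Set.range e) = ⊤) :
    Submodule.span R (Set.range e) ⊔ (lowerCentralSeries R L L 1).toSubmodule = ⊤ := by
  refine Submodule.eq_top_iff'.2 fun x ↦ ?_
  have hx : x ∈ LieSubalgebra.lieSpan R L (Set.range e) := he ▸ LieSubalgebra.mem_top x
  induction hx using LieSubalgebra.lieSpan_induction with
  | mem x hx => exact Submodule.mem_sup_left (Submodule.subset_span hx)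
  | zero => exact zero_mem _
  | add x y _ _ hx hy => exact add_mem hx hy
  | smul r x _ hx => exact Submodule.smul_mem _ r hx
  | lie x y _ _ _ _ =>
    exact Submodule.mem_sup_right (lie_mem_lowerCentralSeries_succ x (LieSubmodule.mem_top y))

lemma lowerCentralSeries_one_le_span_sup {e : ι → L}
    (he : LieSubalgebra.lieSpan R L (Set.range e) = ⊤) :
    (lowerCentralSeries R L L 1).toSubmodule ≤
      Submodule.span R (Set.image2 (⁅·, ·⁆) (Set.range e) (Set.range e)) ⊔
        (lowerCentralSeries R L L 2).toSubmodule := by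
  refine lowerCentralSeries_succ_le_iff.2 fun x y _ ↦ ?_
  have decompose (x : L) := Submodule.mem_sup.1 <|
    span_range_sup_lowerCentralSeries_one he ▸ Submodule.mem_top (x := x)
  obtain ⟨x₀, hx₀, x₁, hx₁, rfl⟩ := decompose x
  obtain ⟨y₀, hy₀, y₁, hy₁, rfl⟩ := decompose y
  rw [add_lie, lie_add, add_assoc]
  refine add_mem (Submodule.mem_sup_left ?_) (Submodule.mem_sup_right (add_mem ?_ ?_))
  · clear * - hx₀ hy₀
    induction hx₀, hy₀ using Submodule.span_induction₂ with
    | mem_mem x y hx hy => exact Submodule.subset_span (Set.mem_image2_of_mem hx hy)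
    | zero_left | zero_right => simp
    | add_left x y z _ _ _ hx hy => simpa only [add_lie] using add_mem hx hy
    | add_right x y z _ _ _ hy hz => simpa only [lie_add] using add_mem hy hz
    | smul_left r x y _ _ h => simpa only [smul_lie] using Submodule.smul_mem _ r h
    | smul_right r x y _ _ h => simpa only [lie_smul] using Submodule.smul_mem _ r h
  · exact lie_mem_lowerCentralSeries_succ x₀ hy₁
  · exact lie_mem_lowerCentralSeries (k := 0) hx₁ (LieSubmodule.mem_top (y₀ + y₁))

end LowerCentralSeries

namespace IsCPAStructure

variable {R L : Type*} [CommRing R] [LieRing L] [LieAlgebra R L] {mul : L →ₗ[R] L →ₗ[R] L}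

/- Expand the two sides of `⁅x, y⁆ · ⁅x, z⁆ = ⁅x, z⁆ · ⁅x, y⁆`, using the derivation rule twice. -/
lemma lie_mul_cyclic (h : IsCPAStructure R mul) (x y z : L) :
    ⁅mul x x, ⁅y, z⁆⁆ + ⁅mul x y, ⁅z, x⁆⁆ + ⁅mul x z, ⁅x, y⁆⁆ = 0 := by
  have expand (y z : L) : mul ⁅x, y⁆ ⁅x, z⁆ =
      ⁅⁅mul x x, y⁆ + ⁅x, mul x y⁆, z⁆ + ⁅x, ⁅mul x z, y⁆ + ⁅x, mul y z⁆⁆ := by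
    rw [h.mul_bracket, h.comm _ x, h.comm _ z, h.mul_bracket, h.mul_bracket, h.comm z x,
      h.comm z y]
  have key := h.comm ⁅x, y⁆ ⁅x, z⁆
  rw [expand y z, expand z y, h.comm z y, ← sub_eq_zero] at key
  rw [← key, leibniz_lie (mul x x), ← lie_skew y, ← lie_skew z x]
  simp only [leibniz_lie x (mul _ _), add_lie, lie_add, lie_neg]
  abel

lemma mul_mem_of_lieSpan_eq_top (h : IsCPAStructure R mul) {s : Set L}
    (hs : LieSubalgebra.lieSpan R L s = ⊤) {J : LieIdeal R L}
    (hJ : ∀ x ∈ s, ∀ y ∈ s, mul x y ∈ J) (x y : L) : mul x y ∈ J := by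
  have hmul {x : L} (hx : x ∈ s) (y : L) : mul x y ∈ J := by
    have hy : y ∈ LieSubalgebra.lieSpan R L s := hs ▸ LieSubalgebra.mem_top y
    induction hy using LieSubalgebra.lieSpan_induction with
    | mem y hy => exact hJ x hx y hy
    | zero => simp
    | add y z _ _ hy hz => simpa only [map_add] using add_mem hy hz
    | smul r y _ hy => simpa only [map_smul] using SMulMemClass.smul_mem r hy
    | lie y z _ _ hy hz =>
      rw [h.mul_bracket]
      exact add_mem (lie_mem_left R L J _ z hy) (lie_mem_right R L J y _ hz)
  have hx : x ∈ LieSubalgebra.lieSpan R L s := hs ▸ LieSubalgebra.mem_top x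
  induction hx using LieSubalgebra.lieSpan_induction generalizing y with
  | mem x hx => exact hmul hx y
  | zero => simp
  | add x z _ _ hx hz => simpa only [map_add, LinearMap.add_apply] using add_mem (hx y) (hz y)
  | smul r x _ hx =>
    simpa only [map_smul, LinearMap.smul_apply] using SMulMemClass.smul_mem r (hx y)
  | lie x z _ _ hx hz =>
    rw [h.bracket_mul]
    exact sub_mem (hx _) (hz _)

lemma mul_mem_lowerCentralSeries_succ (h : IsCPAStructure R mul)
    (h1 : ∀ x y, mul x y ∈ lowerCentralSeries R L L 1) {k : ℕ} (x : L) {y : L}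
    (hy : y ∈ lowerCentralSeries R L L k) : mul x y ∈ lowerCentralSeries R L L (k + 1) := by
  induction k generalizing y with
  | zero => exact h1 x y
  | succ k ih =>
    suffices (lowerCentralSeries R L L (k + 1)).toSubmodule ≤
        (lowerCentralSeries R L L (k + 2)).toSubmodule.comap (mul x) from this hy
    refine lowerCentralSeries_succ_le_iff.2 fun a b hb ↦ ?_
    rw [Submodule.mem_comap, h.mul_bracket]
    exact add_mem (by simpa only [add_comm 1] using! lie_mem_lowerCentralSeries (h1 x a) hb)
      (lie_mem_lowerCentralSeries_succ a (ih hb))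

end IsCPAStructure

section StructureConstants

variable {R : Type*} [CommRing R] {c : Fin 3 → Fin 3 → Fin 3 → R}

/-- If `c i j` lists the coordinates of `e i · e j` with respect to the `cyclicBracket e k`, modulo
triple brackets, then `actionMatrix c y ξ` is the coefficient matrix, in the sense of
`tripleBracket`, of `e y · ∑ k, ξ k • cyclicBracket e k`. -/
def actionMatrix (c : Fin 3 → Fin 3 → Fin 3 → R) (y : Fin 3) (ξ : Fin 3 → R) :
    Matrix (Fin 3) (Fin 3) R :=
  ∑ k, ξ k • (vecMulVec (c y (k + 1)) (Pi.single (k + 2) 1) -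
    vecMulVec (c y (k + 2)) (Pi.single (k + 1) 1))

/-- The coefficient matrix, in the sense of `tripleBracket`, of the difference between the values of
`⁅e y, e z⁆ · e x` computed by the derivation rule and by the rule for a bracket acting, where `c`
holds the coordinates of the products `e i · e j`. -/
def obstruction (c : Fin 3 → Fin 3 → Fin 3 → R) (x y z : Fin 3) : Matrix (Fin 3) (Fin 3) R :=
  vecMulVec (c x y) (Pi.single z 1) - vecMulVec (c x z) (Pi.single y 1) -
    (actionMatrix c y (c z x) - actionMatrix c z (c y x))

/-- The alternating part in `(j, k)` of the structure constants `c i j k`, read as a matrix via the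
identification of `Λ² R³` with `R³`. -/
def skewPart (c : Fin 3 → Fin 3 → Fin 3 → R) : Matrix (Fin 3) (Fin 3) R :=
  .of fun x p ↦ c x (p + 1) (p + 2) - c x (p + 2) (p + 1)

lemma skewPart_apply (c : Fin 3 → Fin 3 → Fin 3 → R) (x p : Fin 3) :
    skewPart c x p = c x (p + 1) (p + 2) - c x (p + 2) (p + 1) := rfl

lemma actionMatrix_apply (y : Fin 3) (ξ : Fin 3 → R) (a b : Fin 3) : actionMatrix c y ξ a b =
    ξ (b + 1) * c y (b + 2) a - ξ (b + 2) * c y (b + 1) a := by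
  fin_cases b <;>
    simp [actionMatrix, Matrix.sum_apply, Fin.sum_univ_three, vecMulVec_apply, Pi.single_apply] <;>
    ring

lemma obstruction_apply (x y z a b : Fin 3) : obstruction c x y z a b =
    c x y a * Pi.single (M := fun _ ↦ R) z 1 b - c x z a * Pi.single (M := fun _ ↦ R) y 1 b -
    ((c z x (b + 1) * c y (b + 2) a - c z x (b + 2) * c y (b + 1) a) -
    (c y x (b + 1) * c z (b + 2) a - c y x (b + 2) * c z (b + 1) a)) := by
  simp only [obstruction, Matrix.sub_apply, actionMatrix_apply, vecMulVec_apply]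

lemma sum_obstruction_last (hc : ∀ i j, c i j = c j i) (x y a : Fin 3) :
    ∑ z, obstruction c x y z a z = 2 * c x y a - ∑ p, skewPart c x p * c y p a := by
  have h : ∑ z, c x z a * Pi.single (M := fun _ ↦ R) y 1 z = c x y a := by simp [Pi.single_apply]
  simp only [obstruction_apply, Finset.sum_sub_distrib, h, Pi.single_eq_same]
  simp [Fin.sum_univ_three, skewPart, hc 1 0, hc 2 0, hc 2 1, hc _ x]
  ring

lemma sum_obstruction_first (hc : ∀ i j, c i j = c j i) (y z a : Fin 3) :
    ∑ x, obstruction c x y z a x =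
      ∑ p, (skewPart c y p * c z p a - skewPart c z p * c y p a) := by
  simp only [obstruction_apply, Finset.sum_sub_distrib, Pi.single_apply, mul_ite, mul_one, mul_zero,
    Finset.sum_ite_eq', hc z y, Finset.mem_univ, if_true]
  simp [Fin.sum_univ_three, skewPart]
  ring

lemma trace_obstruction (x y z : Fin 3) :
    trace (obstruction c x y z) = c x y z - c x z y -
      ∑ p, (skewPart c y p * c z x p - skewPart c z p * c y x p) := by
  simp only [trace, diag_apply, obstruction_apply, Finset.sum_sub_distrib, Pi.single_apply, mul_ite,
    mul_one, mul_zero, Finset.sum_ite_eq', Finset.mem_univ, if_true]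
  simp [Fin.sum_univ_three, skewPart]
  ring

lemma trace_skewPart (hc : ∀ i j, c i j = c j i) : trace (skewPart c) = 0 := by
  simp [trace_fin_three, skewPart, hc 1 0, hc 2 0, hc 2 1]

lemma adjugate_fin_three_eq (A : Matrix (Fin 3) (Fin 3) R) :
    adjugate A = A ^ 2 - trace A • A + trace (adjugate A) • 1 := by
  ext i j
  fin_cases i <;> fin_cases j <;>
    simp [adjugate_fin_three, trace_fin_three, pow_two, mul_apply, Fin.sum_univ_three] <;> ring

lemma two_mul_adjugate_skewPart_apply (x p : Fin 3) :
    2 * adjugate (skewPart c) x p =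
      ∑ q, (skewPart c (p + 1) q * (c (p + 2) x q - c (p + 2) q x) -
        skewPart c (p + 2) q * (c (p + 1) x q - c (p + 1) q x)) := by
  fin_cases x <;> fin_cases p <;>
    simp [adjugate_fin_three, skewPart_apply, Fin.sum_univ_three] <;> ring

lemma skewPart_eq_of_obstruction (hc : ∀ i j, c i j = c j i) {a : Fin 3 → Fin 3 → Fin 3 → R}
    (h : ∀ x y z, obstruction c x y z = a x y z • 1) :
    skewPart a = (2 : R) • skewPart c - skewPart c ^ 2 := by
  have first (x y z) : a x y z = 2 * c x y z - ∑ p, skewPart c x p * c y p z := by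
    simp [← sum_obstruction_last hc, h, one_apply]
  ext x p
  simp only [Matrix.sub_apply, Matrix.smul_apply, smul_eq_mul, pow_two, mul_apply]
  rw [skewPart_apply a, first, first]
  simp only [skewPart_apply c _ p, hc (p + 1), hc (p + 2), mul_sub, Finset.sum_sub_distrib]
  ring

lemma scalar_eq_of_obstruction (hc : ∀ i j, c i j = c j i) {a : Fin 3 → Fin 3 → Fin 3 → R}
    (h : ∀ x y z, obstruction c x y z = a x y z • 1) (x y z : Fin 3) :
    a x y z = ∑ p, (skewPart c y p * c z p x - skewPart c z p * c y p x) := by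
  simp [← sum_obstruction_first hc, h, one_apply]

lemma two_smul_skewPart_eq_of_obstruction (hc : ∀ i j, c i j = c j i)
    {a : Fin 3 → Fin 3 → Fin 3 → R} (h : ∀ x y z, obstruction c x y z = a x y z • 1) :
    (2 : R) • skewPart a = skewPart c - (2 : R) • adjugate (skewPart c) := by
  have third (x y z) : 3 * a x y z = c x y z - c x z y -
      ∑ p, (skewPart c y p * c z x p - skewPart c z p * c y x p) := by
    rw [← trace_obstruction, h, trace_smul, trace_one, smul_eq_mul, mul_comm, Fintype.card_fin,
      Nat.cast_ofNat]
  ext x p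
  have key : 2 * (a x (p + 1) (p + 2) - a x (p + 2) (p + 1)) = skewPart c x p +
      ∑ q, (skewPart c (p + 1) q * (c (p + 2) q x - c (p + 2) x q) -
        skewPart c (p + 2) q * (c (p + 1) q x - c (p + 1) x q)) := by
    have hA := scalar_eq_of_obstruction hc h x (p + 1) (p + 2)
    have hB := scalar_eq_of_obstruction hc h x (p + 2) (p + 1)
    have hC := third x (p + 1) (p + 2)
    simp only [skewPart_apply c x p, mul_sub, Finset.sum_sub_distrib] at hA hB hC ⊢
    linear_combination hC - 2 * hB - hA
  simp only [Matrix.sub_apply, Matrix.smul_apply, smul_eq_mul, skewPart_apply a,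
    two_mul_adjugate_skewPart_apply, key]
  simp only [mul_sub, Finset.sum_sub_distrib]
  ring

theorem eq_zero_of_obstruction (h6 : IsRegular (6 : R)) (hc : ∀ i j, c i j = c j i)
    {a : Fin 3 → Fin 3 → Fin 3 → R} (h : ∀ x y z, obstruction c x y z = a x y z • 1) : c = 0 := by
  have skew_smul : (3 : R) • skewPart c = (-2 * trace (adjugate (skewPart c))) • 1 := by
    have h₂ := two_smul_skewPart_eq_of_obstruction hc h
    rw [skewPart_eq_of_obstruction hc h, adjugate_fin_three_eq, trace_skewPart hc] at h₂
    linear_combination (norm := module) h₂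
  have trace_adjugate : trace (adjugate (skewPart c)) = 0 := by
    have h₃ := congrArg trace skew_smul
    rw [trace_smul, trace_skewPart hc, trace_smul, trace_one, Fintype.card_fin,
      smul_zero, smul_eq_mul, Nat.cast_ofNat] at h₃
    rw [← h6.left.mul_left_eq_zero_iff]
    linear_combination h₃
  have skew_zero : skewPart c = 0 := by
    ext x p
    have h₃ := congrFun₂ skew_smul x p
    rw [trace_adjugate, mul_zero, zero_smul, Matrix.smul_apply, smul_eq_mul,
      Matrix.zero_apply] at h₃
    refine h6.left.mul_left_eq_zero_iff.1 ?_
    linear_combination 2 * h₃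
  ext x y z
  have two_mul_c := sum_obstruction_last hc x y z
  simp only [h, scalar_eq_of_obstruction hc h, skew_zero, Matrix.zero_apply, zero_mul, sub_zero,
    Finset.sum_const_zero, zero_smul] at two_mul_c
  refine h6.left.mul_left_eq_zero_iff.1 ?_
  linear_combination -3 * two_mul_c

end StructureConstants

section FreeNilpotentTriple

variable {R L : Type*} [CommRing R] [LieRing L] [LieAlgebra R L] {e : Fin 3 → L}

/-- The basis `⁅e 1, e 2⁆`, `⁅e 2, e 0⁆`, `⁅e 0, e 1⁆` of the degree two part of a free Lie algebra
on `e 0`, `e 1`, `e 2`, numbered by the missing generator. -/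
def cyclicBracket (e : Fin 3 → L) (k : Fin 3) : L := ⁅e (k + 1), e (k + 2)⁆

/-- The linear combination of the brackets `⁅cyclicBracket e a, e b⁆` with coefficient matrix `w`;
the Jacobi identity says that it kills the scalar matrices. -/
def tripleBracket (e : Fin 3 → L) : Matrix (Fin 3) (Fin 3) R →ₗ[R] L :=
  ∑ a, ∑ b, (entryLinearMap R R a b).smulRight ⁅cyclicBracket e a, e b⁆

lemma tripleBracket_apply (e : Fin 3 → L) (w : Matrix (Fin 3) (Fin 3) R) :
    tripleBracket e w = ∑ a, ∑ b, w a b • ⁅cyclicBracket e a, e b⁆ := by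
  simp [tripleBracket]

lemma tripleBracket_vecMulVec (e : Fin 3 → L) (b a : Fin 3 → R) :
    tripleBracket e (vecMulVec b a) = ⁅∑ i, b i • cyclicBracket e i, ∑ i, a i • e i⁆ := by
  rw [tripleBracket_apply, Finset.sum_comm]
  simp only [vecMulVec_apply, sum_lie, lie_sum, smul_lie, lie_smul, Finset.smul_sum, smul_smul,
    mul_comm]

/-- `e` is a family of free generators of a free nilpotent Lie algebra of class `3` on three
generators. Freeness is encoded as: up to scalars, the Jacobi identity is the only linear relation
between triple brackets of generators. -/
structure IsFreeNilpotentTriple (R : Type*) {L : Type*} [CommRing R] [LieRing L] [LieAlgebra R L]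
    (e : Fin 3 → L) : Prop where
  lieSpan_eq_top : LieSubalgebra.lieSpan R L (Set.range e) = ⊤
  lowerCentralSeries_three : lowerCentralSeries R L L 3 = ⊥
  eq_smul_one_of_tripleBracket_eq_zero (w : Matrix (Fin 3) (Fin 3) R) (hw : tripleBracket e w = 0) :
    ∃ a : R, w = a • 1

lemma cyclicBracket_mem_lowerCentralSeries (e : Fin 3 → L) (k : Fin 3) :
    cyclicBracket e k ∈ lowerCentralSeries R L L 1 :=
  lie_mem_lowerCentralSeries_succ _ (LieSubmodule.mem_top _)

namespace IsFreeNilpotentTriple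

lemma eq_zero_of_mem_lowerCentralSeries (he : IsFreeNilpotentTriple R e) {x : L}
    (hx : x ∈ lowerCentralSeries R L L 3) : x = 0 := by
  rwa [he.lowerCentralSeries_three, LieSubmodule.mem_bot] at hx

lemma exists_sub_sum_smul_mem (he : IsFreeNilpotentTriple R e) (x : L) :
    ∃ a : Fin 3 → R, x - ∑ i, a i • e i ∈ lowerCentralSeries R L L 1 := by
  obtain ⟨y, hy, z, hz, rfl⟩ := Submodule.mem_sup.1 <|
    span_range_sup_lowerCentralSeries_one he.lieSpan_eq_top ▸ Submodule.mem_top (x := x)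
  obtain ⟨a, rfl⟩ := (Submodule.mem_span_range_iff_exists_fun R).1 hy
  exact ⟨a, by rwa [add_sub_cancel_left]⟩

lemma exists_sub_sum_smul_cyclicBracket_mem (he : IsFreeNilpotentTriple R e) {x : L}
    (hx : x ∈ lowerCentralSeries R L L 1) :
    ∃ b : Fin 3 → R, x - ∑ i, b i • cyclicBracket e i ∈ lowerCentralSeries R L L 2 := by
  obtain ⟨y, hy, z, hz, rfl⟩ :=
    Submodule.mem_sup.1 (lowerCentralSeries_one_le_span_sup he.lieSpan_eq_top hx)
  have span_le : Submodule.span R (Set.image2 (⁅·, ·⁆) (Set.range e) (Set.range e)) ≤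
      Submodule.span R (Set.range (cyclicBracket e)) := by
    rw [Submodule.span_le]
    rintro _ ⟨_, ⟨i, rfl⟩, _, ⟨j, rfl⟩, rfl⟩
    have hij : i = j ∨ (∃ k : Fin 3, i = k + 1 ∧ j = k + 2) ∨
        ∃ k : Fin 3, j = k + 1 ∧ i = k + 2 := by
      decide +revert
    obtain rfl | ⟨k, rfl, rfl⟩ | ⟨k, rfl, rfl⟩ := hij
    · simp
    · exact Submodule.subset_span ⟨k, rfl⟩
    · simp only [SetLike.mem_coe]
      rw [← lie_skew]
      exact neg_mem (Submodule.subset_span ⟨k, rfl⟩)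
  obtain ⟨b, rfl⟩ := (Submodule.mem_span_range_iff_exists_fun R).1 (span_le hy)
  exact ⟨b, by rwa [add_sub_cancel_left]⟩

lemma lie_eq_tripleBracket (he : IsFreeNilpotentTriple R e) {x y : L} {a b : Fin 3 → R}
    (hx : x - ∑ i, b i • cyclicBracket e i ∈ lowerCentralSeries R L L 2)
    (hy : y - ∑ i, a i • e i ∈ lowerCentralSeries R L L 1) :
    ⁅x, y⁆ = tripleBracket e (vecMulVec b a) := by
  have hsum : ∑ i, b i • cyclicBracket e i ∈ lowerCentralSeries R L L 1 :=
    sum_mem fun i _ ↦ SMulMemClass.smul_mem _ (cyclicBracket_mem_lowerCentralSeries e i)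
  have h₁ : ⁅x - ∑ i, b i • cyclicBracket e i, y⁆ = 0 :=
    he.eq_zero_of_mem_lowerCentralSeries <|
      lie_mem_lowerCentralSeries (k := 0) hx (LieSubmodule.mem_top y)
  have h₂ : ⁅∑ i, b i • cyclicBracket e i, y - ∑ i, a i • e i⁆ = 0 :=
    he.eq_zero_of_mem_lowerCentralSeries (lie_mem_lowerCentralSeries hsum hy)
  rw [sub_lie, sub_eq_zero] at h₁
  rw [lie_sub, sub_eq_zero] at h₂
  rw [tripleBracket_vecMulVec, h₁, h₂]

lemma eq_zero_of_sum_smul_mem (he : IsFreeNilpotentTriple R e) {a : Fin 3 → R}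
    (ha : ∑ i, a i • e i ∈ lowerCentralSeries R L L 1) : a = 0 := by
  ext j
  have hzero : tripleBracket e (vecMulVec (Pi.single (j + 1) 1) a) = 0 := by
    rw [← he.lie_eq_tripleBracket (x := cyclicBracket e (j + 1)) (y := 0) (by simp) (by simpa),
      lie_zero]
  obtain ⟨r, hr⟩ := he.eq_smul_one_of_tripleBracket_eq_zero _ hzero
  simpa [vecMulVec_apply, one_apply] using congrFun₂ hr (j + 1) j

lemma eq_zero_of_sum_smul_cyclicBracket_mem (he : IsFreeNilpotentTriple R e) {b : Fin 3 → R}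
    (hb : ∑ i, b i • cyclicBracket e i ∈ lowerCentralSeries R L L 2) : b = 0 := by
  ext j
  have hzero : tripleBracket e (vecMulVec b (Pi.single (j + 1) 1)) = 0 := by
    rw [← he.lie_eq_tripleBracket (x := 0) (y := e (j + 1)) (by simpa) (by simp), zero_lie]
  obtain ⟨r, hr⟩ := he.eq_smul_one_of_tripleBracket_eq_zero _ hzero
  simpa [vecMulVec_apply, one_apply] using congrFun₂ hr j (j + 1)

variable {mul : L →ₗ[R] L →ₗ[R] L}

lemma mul_generators_mem_lowerCentralSeries_one (he : IsFreeNilpotentTriple R e)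
    (h : IsCPAStructure R mul) (i j : Fin 3) : mul (e i) (e j) ∈ lowerCentralSeries R L L 1 := by
  choose a ha using fun i j ↦ he.exists_sub_sum_smul_mem (mul (e i) (e j))
  have a_comm (i k) : a i k = a k i := by
    rw [← sub_eq_zero]
    apply he.eq_zero_of_sum_smul_mem
    have := sub_mem (ha k i) (ha i k)
    rw [h.comm (e k)] at this
    simpa [sub_smul] using this
  have triple_zero (i) : tripleBracket e (.of (a i)) = 0 := by
    have of_eq_sum : .of (a i) = ∑ k, vecMulVec (Pi.single k 1) (a i k) := by
      ext; simp [Matrix.sum_apply, vecMulVec_apply, Pi.single_apply]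
    have hlie (k) : tripleBracket e (vecMulVec (Pi.single k 1) (a i k)) =
        -⁅mul (e i) (e k), cyclicBracket e k⁆ := by
      rw [lie_skew, he.lie_eq_tripleBracket (b := Pi.single k 1) (by simp) (ha i k)]
    rw [of_eq_sum, map_sum, Finset.sum_congr rfl fun k _ ↦ hlie k, Finset.sum_neg_distrib,
      neg_eq_zero, ← h.lie_mul_cyclic (e i) (e (i + 1)) (e (i + 2)),
      ← Equiv.sum_comp (Equiv.addLeft i), Fin.sum_univ_three]
    simp [cyclicBracket, add_assoc]
  choose r hr using fun i ↦ he.eq_smul_one_of_tripleBracket_eq_zero _ (triple_zero i)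
  have a_apply (i k j) : a i k j = if k = j then r i else 0 := by
    simpa [one_apply] using congrFun₂ (hr i) k j
  have r_zero (i) : r i = 0 := by
    have := congrFun (a_comm i (i + 1)) (i + 1)
    simpa [a_apply] using this
  have := ha i j
  simpa [a_apply, r_zero] using this

lemma lie_mul_generators (he : IsFreeNilpotentTriple R e) {c : Fin 3 → Fin 3 → Fin 3 → R}
    (hc : ∀ i j, mul (e i) (e j) - ∑ k, c i j k • cyclicBracket e k ∈ lowerCentralSeries R L L 2)
    (i j k : Fin 3) :
    ⁅mul (e i) (e j), e k⁆ = tripleBracket e (vecMulVec (c i j) (Pi.single k 1)) :=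
  he.lie_eq_tripleBracket (hc i j) (by simp)

lemma mul_sum_smul_cyclicBracket (he : IsFreeNilpotentTriple R e)
    (h : IsCPAStructure R mul) {c : Fin 3 → Fin 3 → Fin 3 → R}
    (hc : ∀ i j, mul (e i) (e j) - ∑ k, c i j k • cyclicBracket e k ∈ lowerCentralSeries R L L 2)
    (y : Fin 3) (ξ : Fin 3 → R) :
    mul (e y) (∑ k, ξ k • cyclicBracket e k) = tripleBracket e (actionMatrix c y ξ) := by
  simp only [actionMatrix, map_sum, map_smul, map_sub, ← he.lie_mul_generators hc]
  refine Finset.sum_congr rfl fun k _ ↦ ?_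
  rw [cyclicBracket, h.mul_bracket, ← lie_skew (e _) (mul _ _), sub_eq_add_neg]

lemma tripleBracket_obstruction (he : IsFreeNilpotentTriple R e)
    (h : IsCPAStructure R mul) (h1 : ∀ x y, mul x y ∈ lowerCentralSeries R L L 1)
    {c : Fin 3 → Fin 3 → Fin 3 → R}
    (hc : ∀ i j, mul (e i) (e j) - ∑ k, c i j k • cyclicBracket e k ∈ lowerCentralSeries R L L 2)
    (x y z : Fin 3) : tripleBracket e (obstruction c x y z) = 0 := by
  have hmul (i j k) : mul (e i) (mul (e j) (e k)) = tripleBracket e (actionMatrix c i (c j k)) := by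
    rw [← he.mul_sum_smul_cyclicBracket h hc, ← sub_eq_zero, ← map_sub]
    exact he.eq_zero_of_mem_lowerCentralSeries (h.mul_mem_lowerCentralSeries_succ h1 _ (hc j k))
  simp only [obstruction, map_sub, ← he.lie_mul_generators hc, ← hmul]
  rw [← h.bracket_mul, h.comm ⁅e y, e z⁆, h.mul_bracket, ← lie_skew (e y),
    h.comm (e x), h.comm (e x)]
  abel

lemma mul_generators_mem_lowerCentralSeries_two (he : IsFreeNilpotentTriple R e)
    (h6 : IsRegular (6 : R)) (h : IsCPAStructure R mul)
    (h1 : ∀ x y, mul x y ∈ lowerCentralSeries R L L 1) (i j : Fin 3) :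
    mul (e i) (e j) ∈ lowerCentralSeries R L L 2 := by
  choose c hc using fun i j ↦ he.exists_sub_sum_smul_cyclicBracket_mem (h1 (e i) (e j))
  have c_comm (i j) : c i j = c j i := by
    rw [← sub_eq_zero]
    apply he.eq_zero_of_sum_smul_cyclicBracket_mem
    have := sub_mem (hc j i) (hc i j)
    rw [h.comm (e j)] at this
    simpa [sub_smul] using this
  choose r hr using fun x y z ↦
    he.eq_smul_one_of_tripleBracket_eq_zero _ (he.tripleBracket_obstruction h h1 hc x y z)
  simpa [eq_zero_of_obstruction h6 c_comm hr] using hc i j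

theorem mul_mem_center (he : IsFreeNilpotentTriple R e) (h6 : IsRegular (6 : R))
    (h : IsCPAStructure R mul) (x y : L) : mul x y ∈ LieAlgebra.center R L := by
  have mul_mem_one (x y) : mul x y ∈ lowerCentralSeries R L L 1 :=
    h.mul_mem_of_lieSpan_eq_top he.lieSpan_eq_top (by
      rintro _ ⟨i, rfl⟩ _ ⟨j, rfl⟩
      exact he.mul_generators_mem_lowerCentralSeries_one h i j) x y
  have mul_mem_two (x y) : mul x y ∈ lowerCentralSeries R L L 2 :=
    h.mul_mem_of_lieSpan_eq_top he.lieSpan_eq_top (by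
      rintro _ ⟨i, rfl⟩ _ ⟨j, rfl⟩
      exact he.mul_generators_mem_lowerCentralSeries_two h6 h mul_mem_one i j) x y
  intro z
  exact he.eq_zero_of_mem_lowerCentralSeries (lie_mem_lowerCentralSeries_succ z (mul_mem_two x y))

end IsFreeNilpotentTriple

end FreeNilpotentTriple

section FreeNilpotent

variable {R L L' X : Type*} [CommRing R] [LieRing L] [LieAlgebra R L] [LieRing L'] [LieAlgebra R L']

lemma map_tripleBracket (f : L →ₗ⁅R⁆ L') (e : Fin 3 → L) (w : Matrix (Fin 3) (Fin 3) R) :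
    f (tripleBracket e w) = tripleBracket (f ∘ e) w := by
  simp [tripleBracket_apply, cyclicBracket]

lemma lieSpan_range_freeLieAlgebra_of :
    LieSubalgebra.lieSpan R (FreeLieAlgebra R X) (Set.range (FreeLieAlgebra.of R)) = ⊤ := by
  set S := LieSubalgebra.lieSpan R (FreeLieAlgebra R X) (Set.range (FreeLieAlgebra.of R))
  let g : FreeLieAlgebra R X →ₗ⁅R⁆ S :=
    FreeLieAlgebra.lift R fun i ↦ ⟨.of R i, LieSubalgebra.subset_lieSpan ⟨i, rfl⟩⟩
  have incl_comp_g : S.incl.comp g = LieHom.id := by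
    ext i
    simp [g]
  refine eq_top_iff.2 fun x _ ↦ ?_
  rw [← LieHom.id_apply (R := R) x, ← incl_comp_g]
  exact (g x).2

/-- The projection of a Lie algebra onto its quotient by an ideal, as a morphism of Lie algebras
(`LieSubmodule.Quotient.mk'` is only a morphism of modules). -/
def lieQuotientMk (I : LieIdeal R L) : L →ₗ⁅R⁆ L ⧸ I :=
  { LieSubmodule.Quotient.mk' I with map_lie' := rfl }

lemma lieQuotientMk_surjective (I : LieIdeal R L) : Function.Surjective (lieQuotientMk I) :=
  LieSubmodule.Quotient.surjective_mk' I

lemma lieQuotientMk_eq_zero_iff {I : LieIdeal R L} {x : L} : lieQuotientMk I x = 0 ↔ x ∈ I :=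
  LieSubmodule.Quotient.mk_eq_zero I

lemma lieSpan_lieQuotientMk_eq_top {e : X → L} (I : LieIdeal R L)
    (he : LieSubalgebra.lieSpan R L (Set.range e) = ⊤) :
    LieSubalgebra.lieSpan R (L ⧸ I) (Set.range (lieQuotientMk I ∘ e)) = ⊤ := by
  rw [Set.range_comp, ← LieSubalgebra.map_lieSpan, he, ← LieHom.range_eq_map,
    LieHom.range_eq_top]
  exact lieQuotientMk_surjective I

lemma lowerCentralSeries_quotient_lowerCentralSeries (k : ℕ) :
    lowerCentralSeries R (L ⧸ lowerCentralSeries R L L k)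
      (L ⧸ lowerCentralSeries R L L k) k = ⊥ := by
  rw [← LieIdeal.lowerCentralSeries_map_eq k (lieQuotientMk_surjective _), eq_bot_iff,
    LieIdeal.map_le_iff_le_comap]
  intro x hx
  simpa [lieQuotientMk_eq_zero_iff] using hx

attribute [local instance] LieRing.ofAssociativeRing

/-- The `n × n` matrices supported on the `k`-th and higher diagonals above the main one. These
subspaces filter the matrix algebra, and the `n`-th one is zero. -/
def upperBand (R : Type*) [CommRing R] (n k : ℕ) : Submodule R (Matrix (Fin n) (Fin n) R) where
  carrier := {A | ∀ s t : Fin n, (t : ℕ) < s + k → A s t = 0}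
  add_mem' hA hB s t hst := by simp [hA s t hst, hB s t hst]
  zero_mem' _ _ _ := rfl
  smul_mem' r A hA s t hst := by simp [hA s t hst]

lemma mul_mem_upperBand {n j k : ℕ} {A B : Matrix (Fin n) (Fin n) R} (hA : A ∈ upperBand R n j)
    (hB : B ∈ upperBand R n k) : A * B ∈ upperBand R n (j + k) := by
  intro s t hst
  rw [Matrix.mul_apply]
  refine Finset.sum_eq_zero fun m _ ↦ ?_
  obtain hm | hm := lt_or_ge (m : ℕ) (s + j)
  · rw [hA s m hm, zero_mul]
  · rw [hB m t (by lia), mul_zero]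

lemma lie_mem_upperBand {n j k : ℕ} {A B : Matrix (Fin n) (Fin n) R} (hA : A ∈ upperBand R n j)
    (hB : B ∈ upperBand R n k) : ⁅A, B⁆ ∈ upperBand R n (j + k) :=
  sub_mem (mul_mem_upperBand hA hB) (add_comm j k ▸ mul_mem_upperBand hB hA)

lemma upperBand_anti {n j k : ℕ} (h : j ≤ k) : upperBand R n k ≤ upperBand R n j :=
  fun _ hA s t hst ↦ hA s t (by lia)

lemma map_mem_upperBand {n : ℕ} (f : L →ₗ⁅R⁆ Matrix (Fin n) (Fin n) R) {s : Set L}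
    (hs : LieSubalgebra.lieSpan R L s = ⊤) (hf : ∀ x ∈ s, f x ∈ upperBand R n 1) {k : ℕ} {x : L}
    (hx : x ∈ lowerCentralSeries R L L k) : f x ∈ upperBand R n (k + 1) := by
  have map_mem_one (x) : f x ∈ upperBand R n 1 := by
    have hx : x ∈ LieSubalgebra.lieSpan R L s := hs ▸ LieSubalgebra.mem_top x
    induction hx using LieSubalgebra.lieSpan_induction with
    | mem x hx => exact hf x hx
    | zero => simp
    | add x y _ _ hx hy => simpa only [map_add] using add_mem hx hy
    | smul r x _ hx => simpa only [map_smul] using Submodule.smul_mem _ r hx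
    | lie x y _ _ hx hy =>
      rw [LieHom.map_lie]
      exact upperBand_anti one_le_two (lie_mem_upperBand hx hy)
  induction k generalizing x with
  | zero => exact map_mem_one x
  | succ k ih =>
    suffices (lowerCentralSeries R L L (k + 1)).toSubmodule ≤
        (upperBand R n (k + 2)).comap (f : L →ₗ[R] Matrix (Fin n) (Fin n) R) from this hx
    refine lowerCentralSeries_succ_le_iff.2 fun a b hb ↦ ?_
    rw [Submodule.mem_comap, LieHom.coe_toLinearMap, LieHom.map_lie]
    exact add_comm 1 (k + 1) ▸ lie_mem_upperBand (map_mem_one a) (ih hb)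

/-- The matrix with superdiagonal `d` and all other entries zero. -/
def superdiagonal {n : ℕ} (d : Fin n → R) : Matrix (Fin (n + 1)) (Fin (n + 1)) R :=
  ∑ s, single s.castSucc s.succ (d s)

lemma superdiagonal_mem_upperBand {n : ℕ} (d : Fin n → R) :
    superdiagonal d ∈ upperBand R (n + 1) 1 := by
  refine sum_mem fun i _ s t hst ↦ single_apply_of_ne _ _ _ _ _ ?_
  rintro ⟨rfl, rfl⟩
  simp at hst

lemma lie_lie_superdiagonal_apply (a b c : Fin 3 → R) :
    ⁅⁅superdiagonal a, superdiagonal b⁆, superdiagonal c⁆ 0 3 =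
      a 0 * b 1 * c 2 - b 0 * a 1 * c 2 - c 0 * a 1 * b 2 + c 0 * b 1 * a 2 := by
  simp [superdiagonal, Ring.lie_def, Matrix.mul_apply, Fin.sum_univ_succ, Matrix.single_apply]
  ring

/- The entry in question is the coefficient of the word `p 0, p 1, p 2` in the image of
`tripleBracket (FreeLieAlgebra.of R) w` in the free associative algebra. -/
lemma tripleBracket_superdiagonal_apply_eq_zero {w : Matrix (Fin 3) (Fin 3) R}
    (hw : tripleBracket (FreeLieAlgebra.of R) w ∈
      lowerCentralSeries R (FreeLieAlgebra R (Fin 3)) (FreeLieAlgebra R (Fin 3)) 3)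
    (p : Fin 3 → Fin 3) :
    tripleBracket (fun i ↦ superdiagonal fun s ↦ if p s = i then (1 : R) else 0) w 0 3 = 0 := by
  let f : FreeLieAlgebra R (Fin 3) →ₗ⁅R⁆ Matrix (Fin 4) (Fin 4) R :=
    FreeLieAlgebra.lift R fun i ↦ superdiagonal fun s ↦ if p s = i then 1 else 0
  have f_comp_of : f ∘ FreeLieAlgebra.of R = fun i ↦ superdiagonal _ :=
    FreeLieAlgebra.of_comp_lift _
  rw [← f_comp_of, ← map_tripleBracket]
  refine map_mem_upperBand f lieSpan_range_freeLieAlgebra_of ?_ hw 0 3 (by simp)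
  rintro _ ⟨i, rfl⟩
  simpa [f] using superdiagonal_mem_upperBand _

lemma eq_smul_one_of_tripleBracket_of_mem {w : Matrix (Fin 3) (Fin 3) R}
    (hw : tripleBracket (FreeLieAlgebra.of R) w ∈
      lowerCentralSeries R (FreeLieAlgebra R (Fin 3)) (FreeLieAlgebra R (Fin 3)) 3) :
    w = w 0 0 • 1 := by
  have word_coeff := tripleBracket_superdiagonal_apply_eq_zero hw
  simp only [tripleBracket_apply, cyclicBracket, Matrix.sum_apply, Matrix.smul_apply,
    lie_lie_superdiagonal_apply, smul_eq_mul] at word_coeff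
  have apply_succ (k) : w k (k + 1) = 0 := by
    have := word_coeff ![k + 2, k + 1, k + 1]
    fin_cases k <;> simpa [Fin.sum_univ_three] using this
  have apply_succ_succ (k) : w k (k + 2) = 0 := by
    have := word_coeff ![k + 1, k + 2, k + 2]
    fin_cases k <;> simpa [Fin.sum_univ_three] using this
  have diagonal_succ (k) : w (k + 1) (k + 1) = w k k := by
    have := word_coeff ![k + 1, k + 2, k]
    rw [eq_comm, ← sub_eq_zero]
    fin_cases k <;> simpa [Fin.sum_univ_three, sub_eq_add_neg, add_comm] using this
  have diagonal (k) : w k k = w 0 0 := by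
    fin_cases k
    exacts [rfl, diagonal_succ 0, (diagonal_succ 1).trans (diagonal_succ 0)]
  ext i j
  obtain ⟨d, rfl⟩ : ∃ d, j = i + d := ⟨j - i, by abel⟩
  fin_cases d
  · simp [diagonal]
  · simp [apply_succ, one_apply]
  · simp [apply_succ_succ, one_apply]

/-- `F_{3,3}` over an arbitrary commutative ring `R`; when `R` is a field, this is
`FreeNilpotentLieAlgebra R 3 3`. -/
abbrev FreeNilpotentThree (R : Type*) [CommRing R] :=
  FreeLieAlgebra R (Fin 3) ⧸ lowerCentralSeries R (FreeLieAlgebra R (Fin 3)) _ 3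

lemma isFreeNilpotentTriple_lieQuotientMk_comp_of (R : Type*) [CommRing R] :
    IsFreeNilpotentTriple R (lieQuotientMk (lowerCentralSeries R (FreeLieAlgebra R (Fin 3)) _ 3) ∘
      FreeLieAlgebra.of R) where
  lieSpan_eq_top := lieSpan_lieQuotientMk_eq_top _ lieSpan_range_freeLieAlgebra_of
  lowerCentralSeries_three := lowerCentralSeries_quotient_lowerCentralSeries 3
  eq_smul_one_of_tripleBracket_eq_zero w hw := by
    rw [← map_tripleBracket, lieQuotientMk_eq_zero_iff] at hw
    exact ⟨w 0 0, eq_smul_one_of_tripleBracket_of_mem hw⟩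

end FreeNilpotent

theorem cpa_on_F33_is_central_general {R : Type*} [CommRing R] (h6 : IsRegular (6 : R))
    {mul : FreeNilpotentThree R →ₗ[R] FreeNilpotentThree R →ₗ[R] FreeNilpotentThree R}
    (h : IsCPAStructure R mul) (x y : FreeNilpotentThree R) :
    mul x y ∈ LieAlgebra.center R (FreeNilpotentThree R) :=
  (isFreeNilpotentTriple_lieQuotientMk_comp_of R).mul_mem_center h6 h x y

/-- Every CPA-structure on the free-nilpotent Lie algebra `F_{3,3}` over a field of
characteristic zero is central. -/
theorem cpa_on_F33_is_central (K : Type*) [Field K] [CharZero K]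
    (mul : FreeNilpotentLieAlgebra K 3 3 →ₗ[K]
      FreeNilpotentLieAlgebra K 3 3 →ₗ[K] FreeNilpotentLieAlgebra K 3 3)
    (hcpa : IsCPAStructure K mul) :
    ∀ x y : FreeNilpotentLieAlgebra K 3 3,
      mul x y ∈ LieAlgebra.center K (FreeNilpotentLieAlgebra K 3 3) :=
  cpa_on_F33_is_central_general (.of_ne_zero (by norm_num)) hcpa
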